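/- arXiv:1412.7526 — 2 statements merged into one kernel-verified Lean document; each statement's English description precedes it below -/
import Mathlib

section
/- The operator R : C(J,𝒮) → C(J,𝒮) defined by R(v)(t) = ∫₀^t f(s,v(s)) ds is continuous. -/
/-!
Up to extending functions from `[a, ∞)` to the line, `R` is componentwise the composition of the
superposition operator `v ↦ f i (·, v ·)` and the primitive `w ↦ ∫ₐᵗ w dμ`. Continuity into a space
`C(T, Y)` with the compact-open topology follows from joint continuity of the uncurried map, which
is evident for the former and is the continuity of parametric integrals for the latter.
-/

open Set MeasureTheory

noncomputable section

/-- Projection of `ℝ` onto the half line `J = [0, ∞)`. -/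
def pj (s : ℝ) : Set.Ici (0:ℝ) := ⟨max 0 s, le_max_left 0 s⟩

/-- The seminorm `[x]ₙ = max_{1 ≤ i ≤ n} |xᵢ|` on `𝒮 = ℝ^ℕ` (components indexed from `0` to `n-1`). -/
def semS (n : ℕ) (x : ℕ → ℝ) : ℝ := ⨆ i : Fin n, |x (i : ℕ)|

section Superposition

variable {T X : Type*} [TopologicalSpace T] [TopologicalSpace X]

/-- The superposition (Nemytskii) operator `v ↦ (t ↦ g (t, v t))` attached to `g`, through which
the integrand of an integral operator depends on the unknown function. -/
def superposition {Y : Type*} [TopologicalSpace Y] (g : C(T × X, Y)) (v : C(T, X)) : C(T, Y) :=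
  g.comp ((ContinuousMap.id T).prodMk v)

variable [LocallyCompactSpace T]

theorem continuous_superposition {Y : Type*} [TopologicalSpace Y] (g : C(T × X, Y)) :
    Continuous (superposition g) := by
  refine ContinuousMap.continuous_of_continuous_uncurry _ ?_
  change Continuous fun p : C(T, X) × T => g (p.2, p.1 p.2)
  fun_prop

theorem continuous_of_forall_continuous_eval_comp {ι : Type*} {Y : ι → Type*}
    [∀ i, TopologicalSpace (Y i)] {F : X → C(T, ∀ i, Y i)}
    (hF : ∀ i, Continuous fun x => (ContinuousMap.eval i).comp (F x)) : Continuous F := by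
  refine ContinuousMap.continuous_of_continuous_uncurry _ (continuous_pi fun i => ?_)
  exact ContinuousMap.continuous_uncurry_of_continuous ⟨_, hF i⟩

end Superposition

theorem continuous_projIci {α : Type*} [LinearOrder α] [TopologicalSpace α] [OrderClosedTopology α]
    (a : α) : Continuous (projIci a) :=
  Continuous.subtype_mk (by fun_prop) _

section Primitive

variable {E : Type*} [NormedAddCommGroup E] [NormedSpace ℝ E]
  (μ : Measure ℝ) [IsLocallyFiniteMeasure μ] [NullSingletonClass μ] (a : ℝ)

/-- The primitive `t ↦ ∫ₐᵗ u dμ` of a continuous function on the line, as an operator on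
`C(ℝ, E)`. -/
def primitive (u : C(ℝ, E)) : C(ℝ, E) where
  toFun t := ∫ s in a..t, u s ∂μ
  continuous_toFun :=
    intervalIntegral.continuous_primitive (fun _ _ => u.continuous.intervalIntegrable _ _) a

theorem continuous_primitive : Continuous (primitive μ a : C(ℝ, E) → C(ℝ, E)) := by
  refine ContinuousMap.continuous_of_continuous_uncurry _ ?_
  refine intervalIntegral.continuous_parametric_intervalIntegral_of_continuous
    (f := fun (p : C(ℝ, E) × ℝ) s => p.1 s) ?_ continuous_snd
  fun_prop

/-- The primitive `t ↦ ∫ₐᵗ w dμ` of a continuous function on `[a, ∞)`, as an operator on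
`C([a, ∞), E)`. To integrate over the line, `w` is extended by the constant `w a` to the left of
`a`. -/
def primitiveIci (w : C(Ici a, E)) : C(Ici a, E) :=
  (primitive μ a (w.comp ⟨projIci a, continuous_projIci a⟩)).restrict (Ici a)

theorem continuous_primitiveIci :
    Continuous (primitiveIci μ a : C(Ici a, E) → C(Ici a, E)) :=
  (ContinuousMap.continuous_restrict (Ici a)).comp
    ((continuous_primitive μ a).comp (ContinuousMap.continuous_precomp _))

variable {a} in
theorem primitiveIci_apply_eq_integral {w : C(Ici a, E)} {h : ℝ → E}
    (hwh : ∀ s : Ici a, w s = h s) (t : Ici a) :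
    primitiveIci μ a w t = ∫ s in a..t, h s ∂μ := by
  refine intervalIntegral.integral_congr fun s hs => ?_
  have has : a ≤ s := (uIcc_of_le (mem_Ici.mp t.2) ▸ hs).1
  calc w (projIci a s) = w ⟨s, has⟩ := by rw [projIci_of_mem has]
    _ = h s := hwh ⟨s, has⟩

end Primitive

theorem statement_5_general
    {X ι : Type*} [TopologicalSpace X] {E : ι → Type*} [∀ i, NormedAddCommGroup (E i)]
    [∀ i, NormedSpace ℝ (E i)] [∀ i, CompleteSpace (E i)]
    (μ : Measure ℝ) [IsLocallyFiniteMeasure μ] [NullSingletonClass μ] (a : ℝ)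
    (f : ∀ i, ℝ → X → E i)
    (hf : ∀ i, ContinuousOn (fun q : ℝ × X => f i q.1 q.2) (Ici a ×ˢ univ))
    (R : C(Ici a, X) → C(Ici a, ∀ i, E i))
    (hR : ∀ (v : C(Ici a, X)) (t : Ici a) (i : ι),
      R v t i = ∫ s in a..t, f i s (v (projIci a s)) ∂μ) :
    Continuous R := by
  have : LocallyCompactSpace (Ici a) := isClosed_Ici.locallyCompactSpace
  let g (i : ι) : C(Ici a × X, E i) :=
    ⟨fun q => f i q.1 q.2, (hf i).comp_continuous (f := fun q : Ici a × X => ((q.1 : ℝ), q.2))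
      (by fun_prop) fun q => ⟨q.1.2, mem_univ _⟩⟩
  have R_eq (i : ι) (v : C(Ici a, X)) :
      primitiveIci μ a (superposition (g i) v) = (ContinuousMap.eval i).comp (R v) := by
    ext t
    have hgf (s : Ici a) : superposition (g i) v s = f i s (v (projIci a s)) := by
      rw [projIci_coe]
      rfl
    exact (primitiveIci_apply_eq_integral μ hgf t).trans (hR v t i).symm
  refine continuous_of_forall_continuous_eval_comp fun i => ?_
  exact ((continuous_primitiveIci μ a).comp (continuous_superposition (g i))).congr (R_eq i)

/-- The operator `R : C(J,𝒮) → C(J,𝒮)`, `R(v)(t) = ∫₀^t f(s,v(s)) ds` (componentwise),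
is continuous. -/
theorem statement_5
    (f : ℕ → ℝ → (ℕ → ℝ) → ℝ)
    (hf : ∀ n, ContinuousOn (fun q : ℝ × (ℕ → ℝ) => f n q.1 q.2)
      (Set.Ici (0:ℝ) ×ˢ (Set.univ : Set (ℕ → ℝ))))
    (R : C(Set.Ici (0:ℝ), ℕ → ℝ) → C(Set.Ici (0:ℝ), ℕ → ℝ))
    (hR : ∀ (v : C(Set.Ici (0:ℝ), ℕ → ℝ)) (t : Set.Ici (0:ℝ)) (n : ℕ),
      R v t n = ∫ s in (0:ℝ)..(t : ℝ), f n s (v (pj s))) :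
    Continuous R :=
  -- `pj` is definitionally `projIci 0`.
  statement_5_general volume 0 f hf R hR
end
end

section
/- Fix p ∈ ℕ, t_p > t₀ and θ_p > 0, and suppose that [f(t,x)]_{n_p} ≤ A_p(t)[x]_{n_p} + B_p for all t ∈ [0,t₀] and x ∈ 𝒮, and [f(t,x)]_{n_p} ≤ C_p([x]_{n_p} + 1) for all t ∈ [t₀,t_p] and x ∈ 𝒮, where A_p ∈ L¹(0,t₀) is nonnegative and B_p, C_p ≥ 0. Then for every x ∈ C(J,𝒮), 𝒬_p(T(x)) ≤ G_p·(‖A_p‖_{L¹}·𝒫_p(x) + t₀·B_p) + C_p·(𝒬_p(x)/θ_p + t_p − t₀), where 𝒫_p(x) = max_{0≤t≤t₀} [x(t)]_{n_p}, 𝒬_p(x) = max_{t₀≤t≤t_p} e^{−θ_p(t−t₀)}[x(t)]_{n_p}, and G_p = [(𝕀 − ⟨α,𝕀⟩)^{-1}]_{n_p}·[‖α‖_*]_{n_p} + 1. -/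
open Set MeasureTheory

noncomputable section

/-- Restriction of the `n`-th component of `x ∈ C(J, 𝒮)` to `[0, t₀]`, as an element of `C([0,t₀], ℝ)`. -/
def restr (t₀ : ℝ) (x : C(Set.Ici (0:ℝ), ℕ → ℝ)) (n : ℕ) : C(Set.Icc (0:ℝ) t₀, ℝ) :=
  ⟨fun s => x ⟨s.1, s.2.1⟩ n,
    ((continuous_apply n).comp x.continuous).comp
      (continuous_inclusion Set.Icc_subset_Ici_self)⟩

/-- `IsT t₀ f α T` says that `T` is the operator
`T(v)(t) = (𝕀 − ⟨α,𝕀⟩)⁻¹ · ⟨α, (∫₀^· f(s,v(s)) ds)|_{[0,t₀]}⟩ + ∫₀^t f(s,v(s)) ds`,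
written componentwise; `P` is the restriction of the primitive `∫₀^· f_n(s,v(s)) ds` to `[0,t₀]`. -/
def IsT (t₀ : ℝ) (f : ℕ → ℝ → (ℕ → ℝ) → ℝ)
    (α : ℕ → C(Set.Icc (0:ℝ) t₀, ℝ) →L[ℝ] ℝ)
    (T : C(Set.Ici (0:ℝ), ℕ → ℝ) → C(Set.Ici (0:ℝ), ℕ → ℝ)) : Prop :=
  ∀ v : C(Set.Ici (0:ℝ), ℕ → ℝ), ∀ n : ℕ,
    ∃ P : C(Set.Icc (0:ℝ) t₀, ℝ),
      (∀ s : Set.Icc (0:ℝ) t₀, P s = ∫ u in (0:ℝ)..(s : ℝ), f n u (v (pj u))) ∧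
      ∀ t : Set.Ici (0:ℝ),
        T v t n = (1 - α n 1)⁻¹ * α n P + ∫ s in (0:ℝ)..(t : ℝ), f n s (v (pj s))

/-- `𝒫ₙ(x) = max_{0 ≤ t ≤ t₀} [x(t)]ₙ`. -/
def Psem (t₀ : ℝ) (n : ℕ) (x : C(Set.Ici (0:ℝ), ℕ → ℝ)) : ℝ :=
  ⨆ t : Set.Icc (0:ℝ) t₀, semS n (x ⟨t.1, t.2.1⟩)

/-- `𝒬ₙ(x) = max_{t₀ ≤ t ≤ t_p} e^{-θ(t-t₀)} [x(t)]ₙ`. -/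
def Qsem (t₀ tp θ : ℝ) (ht₀ : 0 ≤ t₀) (n : ℕ) (x : C(Set.Ici (0:ℝ), ℕ → ℝ)) : ℝ :=
  ⨆ t : Set.Icc t₀ tp, Real.exp (-θ * (t.1 - t₀)) * semS n (x ⟨t.1, le_trans ht₀ t.2.1⟩)

/-- `Gₙ = [(𝕀 − ⟨α,𝕀⟩)⁻¹]ₙ · [‖α‖_*]ₙ + 1`. -/
def Gconst (t₀ : ℝ) (α : ℕ → C(Set.Icc (0:ℝ) t₀, ℝ) →L[ℝ] ℝ) (n : ℕ) : ℝ :=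
  semS n (fun i => (1 - α i 1)⁻¹) * semS n (fun i => ‖α i‖) + 1

/-!
The weight `exp (-θ (t - t₀))` in `Qsem` is Bielecki's: integrating `s ↦ exp (θ (s - t₀))` over
`[t₀, t]` gains a factor `1 / θ` and costs at most the inverse of that weight. Split the primitive
in `T x` at `t₀`. Up to `t₀` it is bounded by `K = ‖A‖ Psem x + t₀ B`, so the nonlocal term and the
integral over `[0, t₀]` together contribute at most `G K`, which the weight only decreases; the
integral over `[t₀, t]` is controlled by `Qsem x` through the Bielecki estimate.
-/

theorem semS_eq_norm (n : ℕ) (x : ℕ → ℝ) : semS n x = ‖fun i : Fin n => x i‖ := by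
  have bdd : BddAbove (range fun i : Fin n => |x i|) := (finite_range _).bddAbove
  refine le_antisymm (Real.iSup_le (fun i => norm_le_pi_norm (fun i : Fin n => x i) i)
    (norm_nonneg _)) ?_
  exact (pi_norm_le_iff_of_nonneg (Real.iSup_nonneg fun _ => abs_nonneg _)).2
    fun i => le_ciSup bdd i

theorem semS_nonneg (n : ℕ) (x : ℕ → ℝ) : 0 ≤ semS n x :=
  Real.iSup_nonneg fun _ => abs_nonneg _

theorem abs_le_semS {n i : ℕ} (hi : i < n) (x : ℕ → ℝ) : |x i| ≤ semS n x := by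
  rw [semS_eq_norm]
  exact norm_le_pi_norm (fun i : Fin n => x i) ⟨i, hi⟩

theorem semS_le {n : ℕ} {x : ℕ → ℝ} {M : ℝ} (hM : 0 ≤ M) (h : ∀ i < n, |x i| ≤ M) :
    semS n x ≤ M :=
  Real.iSup_le (fun i => h i i.2) hM

theorem continuous_semS (n : ℕ) : Continuous (semS n) := by
  rw [funext (semS_eq_norm n)]
  fun_prop

theorem continuous_pj : Continuous pj := by
  unfold pj
  fun_prop

theorem pj_of_nonneg {s : ℝ} (hs : 0 ≤ s) : pj s = ⟨s, hs⟩ :=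
  Subtype.ext (max_eq_right hs)

section Seminorms

variable {t₀ tp θ : ℝ} {n : ℕ} {x : C(Ici (0 : ℝ), ℕ → ℝ)}

theorem Psem_nonneg : 0 ≤ Psem t₀ n x :=
  Real.iSup_nonneg fun _ => semS_nonneg _ _

theorem semS_le_Psem {s : ℝ} (hs : s ∈ Icc 0 t₀) : semS n (x (pj s)) ≤ Psem t₀ n x := by
  have hcont : Continuous fun t : Icc (0 : ℝ) t₀ => semS n (x ⟨t.1, t.2.1⟩) :=
    (continuous_semS n).comp (x.continuous.comp (by fun_prop))
  rw [pj_of_nonneg hs.1]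
  exact le_ciSup (isCompact_range hcont).bddAbove ⟨s, hs⟩

theorem Qsem_nonneg {ht₀ : 0 ≤ t₀} : 0 ≤ Qsem t₀ tp θ ht₀ n x :=
  Real.iSup_nonneg fun _ => mul_nonneg (Real.exp_nonneg _) (semS_nonneg _ _)

theorem semS_le_exp_mul_Qsem (ht₀ : 0 ≤ t₀) {s : ℝ} (hs : s ∈ Icc t₀ tp) :
    semS n (x (pj s)) ≤ Real.exp (θ * (s - t₀)) * Qsem t₀ tp θ ht₀ n x := by
  have hcont : Continuous fun t : Icc t₀ tp =>
      Real.exp (-θ * (t.1 - t₀)) * semS n (x ⟨t.1, ht₀.trans t.2.1⟩) :=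
    .mul (by fun_prop) ((continuous_semS n).comp (x.continuous.comp (by fun_prop)))
  rw [pj_of_nonneg (ht₀.trans hs.1), ← inv_mul_le_iff₀ (Real.exp_pos _), ← Real.exp_neg,
    ← neg_mul]
  exact le_ciSup (isCompact_range hcont).bddAbove ⟨s, hs⟩

theorem Qsem_le {ht₀ : 0 ≤ t₀} {M : ℝ} (hM : 0 ≤ M)
    (h : ∀ t : Ici (0 : ℝ), t.1 ∈ Icc t₀ tp → ∀ i < n,
      Real.exp (-θ * (t.1 - t₀)) * |x t i| ≤ M) :
    Qsem t₀ tp θ ht₀ n x ≤ M := by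
  refine Real.iSup_le (fun t => ?_) hM
  rw [← le_div_iff₀' (Real.exp_pos _)]
  refine semS_le (by positivity) fun i hi => ?_
  rw [le_div_iff₀' (Real.exp_pos _)]
  exact h ⟨t, ht₀.trans t.2.1⟩ t.2 i hi

end Seminorms

theorem abs_integral_le_integral_of_abs_le {a b s : ℝ} {g h : ℝ → ℝ} (hs : s ∈ Icc a b)
    (hh : IntervalIntegrable h volume a b) (hgh : ∀ u ∈ Icc a b, |g u| ≤ h u) :
    |∫ u in a..s, g u| ≤ ∫ u in a..b, h u := by
  have hsub : uIcc a s ⊆ uIcc a b := by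
    rw [uIcc_of_le hs.1, uIcc_of_le (hs.1.trans hs.2)]
    exact Icc_subset_Icc_right hs.2
  calc |∫ u in a..s, g u| ≤ ∫ u in a..s, h u :=
        intervalIntegral.norm_integral_le_of_norm_le (f := g) hs.1
          (.of_forall fun u hu => hgh u ⟨hu.1.le, hu.2.trans hs.2⟩) (hh.mono_set hsub)
    _ ≤ ∫ u in a..b, h u := by
        refine intervalIntegral.integral_mono_interval le_rfl hs.1 hs.2 ?_ hh
        filter_upwards [ae_restrict_mem measurableSet_Ioc] with u hu
        exact (abs_nonneg _).trans (hgh u (Ioc_subset_Icc_self hu))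

theorem integral_exp_mul_sub {θ : ℝ} (hθ : θ ≠ 0) (a b : ℝ) :
    ∫ s in a..b, Real.exp (θ * (s - a)) = (Real.exp (θ * (b - a)) - 1) / θ := by
  rw [intervalIntegral.integral_comp_sub_right (fun s => Real.exp (θ * s)),
    intervalIntegral.integral_comp_mul_left _ hθ, integral_exp, sub_self, mul_zero, Real.exp_zero,
    smul_eq_mul, div_eq_inv_mul]

theorem exp_neg_mul_sub_le_one {θ a b : ℝ} (hθ : 0 ≤ θ) (hab : a ≤ b) :
    Real.exp (-θ * (b - a)) ≤ 1 :=
  Real.exp_le_one_iff.2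
    (mul_nonpos_of_nonpos_of_nonneg (neg_nonpos.2 hθ) (sub_nonneg.2 hab))

theorem exp_mul_integral_exp_mul_add_one_le {θ a b q : ℝ} (hθ : 0 < θ) (hab : a ≤ b)
    (hq : 0 ≤ q) :
    Real.exp (-θ * (b - a)) * ∫ s in a..b, (Real.exp (θ * (s - a)) * q + 1) ≤
      q / θ + (b - a) := by
  have hintegral : ∫ s in a..b, (Real.exp (θ * (s - a)) * q + 1) =
      (Real.exp (θ * (b - a)) - 1) / θ * q + (b - a) := by
    rw [intervalIntegral.integral_add (Continuous.intervalIntegrable (by fun_prop) _ _)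
        intervalIntegrable_const, intervalIntegral.integral_mul_const,
      integral_exp_mul_sub hθ.ne', intervalIntegral.integral_const, smul_eq_mul, mul_one]
  have hcancel : Real.exp (-θ * (b - a)) * Real.exp (θ * (b - a)) = 1 := by
    rw [← Real.exp_add, neg_mul, neg_add_cancel, Real.exp_zero]
  have hweight : Real.exp (-θ * (b - a)) ≤ 1 := exp_neg_mul_sub_le_one hθ.le hab
  calc Real.exp (-θ * (b - a)) * ∫ s in a..b, (Real.exp (θ * (s - a)) * q + 1)
      = (Real.exp (-θ * (b - a)) * Real.exp (θ * (b - a)) - Real.exp (-θ * (b - a))) * (q / θ) +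
          Real.exp (-θ * (b - a)) * (b - a) := by rw [hintegral]; ring
    _ ≤ 1 * (q / θ) + 1 * (b - a) := by
        rw [hcancel]
        gcongr
        exact sub_le_self _ (Real.exp_nonneg _)
    _ = q / θ + (b - a) := by ring

theorem abs_mul_apply_add_le {X : Type*} [TopologicalSpace X] [CompactSpace X]
    (c : ℝ) (φ : C(X, ℝ) →L[ℝ] ℝ) {P : C(X, ℝ)} {r K : ℝ} (hP : ∀ s, |P s| ≤ K) (hr : |r| ≤ K) :
    |c * φ P + r| ≤ (|c| * ‖φ‖ + 1) * K := by
  have hφP : |φ P| ≤ ‖φ‖ * K :=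
    φ.le_opNorm_of_le ((ContinuousMap.norm_le _ ((abs_nonneg r).trans hr)).2 hP)
  calc |c * φ P + r| ≤ |c| * |φ P| + |r| := by rw [← abs_mul]; exact abs_add_le _ _
    _ ≤ |c| * (‖φ‖ * K) + K := by gcongr
    _ = (|c| * ‖φ‖ + 1) * K := by ring

theorem abs_mul_apply_add_le_semS {X : Type*} [TopologicalSpace X] [CompactSpace X] {n i : ℕ}
    (hi : i < n) (c : ℕ → ℝ) (α : ℕ → C(X, ℝ) →L[ℝ] ℝ) {P : C(X, ℝ)} {r K : ℝ}
    (hP : ∀ s, |P s| ≤ K) (hr : |r| ≤ K) :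
    |c i * α i P + r| ≤ (semS n c * semS n (fun i => ‖α i‖) + 1) * K := by
  have hK : 0 ≤ K := (abs_nonneg r).trans hr
  have hc : |c i| ≤ semS n c := abs_le_semS hi c
  have hα : ‖α i‖ ≤ semS n (fun i => ‖α i‖) :=
    (le_abs_self _).trans (abs_le_semS hi fun i => ‖α i‖)
  refine (abs_mul_apply_add_le (c i) (α i) hP hr).trans ?_
  gcongr
  exact semS_nonneg _ _

section Growth

variable {t₀ tp θ : ℝ} {n i : ℕ} {x : C(Ici (0 : ℝ), ℕ → ℝ)} {g : ℝ → ℕ → ℝ}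

theorem abs_integral_le_mul_Psem {A : ℝ → ℝ} {B : ℝ} (hi : i < n)
    (hA_nonneg : ∀ t ∈ Icc 0 t₀, 0 ≤ A t) (hA_int : IntervalIntegrable A volume 0 t₀)
    (hgrowth : ∀ t ∈ Icc 0 t₀, semS n (g t) ≤ A t * semS n (x (pj t)) + B)
    {s : ℝ} (hs : s ∈ Icc 0 t₀) :
    |∫ u in 0..s, g u i| ≤ (∫ t in 0..t₀, A t) * Psem t₀ n x + t₀ * B := by
  have hbound : ∀ u ∈ Icc 0 t₀, |g u i| ≤ A u * Psem t₀ n x + B := fun u hu =>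
    calc |g u i| ≤ semS n (g u) := abs_le_semS hi _
      _ ≤ A u * semS n (x (pj u)) + B := hgrowth u hu
      _ ≤ A u * Psem t₀ n x + B := by
          gcongr
          exacts [hA_nonneg u hu, semS_le_Psem hu]
  have hAP : IntervalIntegrable (fun u => A u * Psem t₀ n x) volume 0 t₀ := hA_int.mul_const _
  calc |∫ u in 0..s, g u i| ≤ ∫ u in 0..t₀, (A u * Psem t₀ n x + B) :=
        abs_integral_le_integral_of_abs_le hs (hAP.add intervalIntegrable_const) hbound
    _ = (∫ t in 0..t₀, A t) * Psem t₀ n x + t₀ * B := by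
        rw [intervalIntegral.integral_add hAP intervalIntegrable_const,
          intervalIntegral.integral_mul_const, intervalIntegral.integral_const, sub_zero,
          smul_eq_mul]

theorem exp_mul_abs_integral_le_mul_Qsem {C : ℝ} (ht₀ : 0 ≤ t₀) (hθ : 0 < θ) (hC : 0 ≤ C)
    (hi : i < n) (hgrowth : ∀ t ∈ Icc t₀ tp, semS n (g t) ≤ C * (semS n (x (pj t)) + 1))
    {t : ℝ} (ht : t ∈ Icc t₀ tp) :
    Real.exp (-θ * (t - t₀)) * |∫ u in t₀..t, g u i| ≤
      C * (Qsem t₀ tp θ ht₀ n x / θ + (tp - t₀)) := by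
  set Q := Qsem t₀ tp θ ht₀ n x
  have hbound : ∀ u ∈ Icc t₀ t, |g u i| ≤ C * (Real.exp (θ * (u - t₀)) * Q + 1) := fun u hu => by
    have hu' : u ∈ Icc t₀ tp := Icc_subset_Icc_right ht.2 hu
    calc |g u i| ≤ semS n (g u) := abs_le_semS hi _
      _ ≤ C * (semS n (x (pj u)) + 1) := hgrowth u hu'
      _ ≤ C * (Real.exp (θ * (u - t₀)) * Q + 1) := by
          gcongr
          exact semS_le_exp_mul_Qsem ht₀ hu'
  calc Real.exp (-θ * (t - t₀)) * |∫ u in t₀..t, g u i|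
      ≤ Real.exp (-θ * (t - t₀)) * ∫ u in t₀..t, C * (Real.exp (θ * (u - t₀)) * Q + 1) := by
        gcongr
        exact abs_integral_le_integral_of_abs_le (right_mem_Icc.2 ht.1)
          (Continuous.intervalIntegrable (by fun_prop) _ _) hbound
    _ = C * (Real.exp (-θ * (t - t₀)) * ∫ u in t₀..t, (Real.exp (θ * (u - t₀)) * Q + 1)) := by
        rw [intervalIntegral.integral_const_mul, mul_left_comm]
    _ ≤ C * (Q / θ + (tp - t₀)) := by
        gcongr
        refine (exp_mul_integral_exp_mul_add_one_le hθ ht.1 Qsem_nonneg).trans ?_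
        gcongr
        exact ht.2

end Growth

theorem intervalIntegrable_comp_pj {E F : Type*} [TopologicalSpace E] [NormedAddCommGroup F]
    {φ : ℝ → E → F} {a b : ℝ}
    (hφ : ContinuousOn (fun q : ℝ × E => φ q.1 q.2) (Ici 0 ×ˢ univ))
    (x : C(Ici (0 : ℝ), E)) (ha : 0 ≤ a) (hb : 0 ≤ b) :
    IntervalIntegrable (fun s => φ s (x (pj s))) volume a b := by
  have hgraph : Continuous fun s : ℝ => (s, x (pj s)) :=
    continuous_id.prodMk (x.continuous.comp continuous_pj)
  have hmaps : MapsTo (fun s : ℝ => (s, x (pj s))) (uIcc a b) (Ici 0 ×ˢ univ) :=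
    fun _ hs => ⟨(le_min ha hb).trans hs.1, mem_univ _⟩
  exact (hφ.comp hgraph.continuousOn hmaps).intervalIntegrable

/-- In the paper's notation `g` is the superposition `s ↦ f(s, x(s))`, `y` is `T(x)` and `c` is
`(𝕀 − ⟨α,𝕀⟩)⁻¹`. -/
theorem statement_9_general {t₀ tp θ : ℝ} (ht₀ : 0 ≤ t₀) (htp : t₀ ≤ tp) (hθ : 0 < θ) {n : ℕ}
    {x y : C(Ici (0 : ℝ), ℕ → ℝ)} {g : ℝ → ℕ → ℝ} {c : ℕ → ℝ}
    {α : ℕ → C(Icc (0 : ℝ) t₀, ℝ) →L[ℝ] ℝ} {P : ℕ → C(Icc (0 : ℝ) t₀, ℝ)}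
    {A : ℝ → ℝ} {B C : ℝ}
    (hg : ∀ i < n, IntervalIntegrable (g · i) volume 0 tp)
    (hP : ∀ i < n, ∀ s, P i s = ∫ u in 0..(s : ℝ), g u i)
    (hy : ∀ i < n, ∀ t, y t i = c i * α i (P i) + ∫ u in 0..(t : ℝ), g u i)
    (hA_nonneg : ∀ t ∈ Icc 0 t₀, 0 ≤ A t) (hA_int : IntervalIntegrable A volume 0 t₀)
    (hB : 0 ≤ B) (hC : 0 ≤ C)
    (hgrowth₁ : ∀ t ∈ Icc 0 t₀, semS n (g t) ≤ A t * semS n (x (pj t)) + B)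
    (hgrowth₂ : ∀ t ∈ Icc t₀ tp, semS n (g t) ≤ C * (semS n (x (pj t)) + 1)) :
    Qsem t₀ tp θ ht₀ n y ≤
      (semS n c * semS n (fun i => ‖α i‖) + 1) *
          ((∫ t in 0..t₀, A t) * Psem t₀ n x + t₀ * B) +
        C * (Qsem t₀ tp θ ht₀ n x / θ + (tp - t₀)) := by
  set K := (∫ t in 0..t₀, A t) * Psem t₀ n x + t₀ * B
  set G := semS n c * semS n (fun i => ‖α i‖) + 1
  have hK : 0 ≤ K := add_nonneg
    (mul_nonneg (intervalIntegral.integral_nonneg ht₀ hA_nonneg) Psem_nonneg) (mul_nonneg ht₀ hB)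
  have hG : 0 ≤ G := add_nonneg (mul_nonneg (semS_nonneg _ _) (semS_nonneg _ _)) zero_le_one
  have hlate : 0 ≤ C * (Qsem t₀ tp θ ht₀ n x / θ + (tp - t₀)) :=
    mul_nonneg hC (add_nonneg (div_nonneg Qsem_nonneg hθ.le) (sub_nonneg.2 htp))
  refine Qsem_le (add_nonneg (mul_nonneg hG hK) hlate) fun t ht i hi => ?_
  have hprimitive : ∀ s ∈ Icc 0 t₀, |∫ u in 0..s, g u i| ≤ K := fun s hs =>
    abs_integral_le_mul_Psem hi hA_nonneg hA_int hgrowth₁ hs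
  have hinitial : |c i * α i (P i) + ∫ u in 0..t₀, g u i| ≤ G * K :=
    abs_mul_apply_add_le_semS hi c α (fun s => (hP i hi s).symm ▸ hprimitive s s.2)
      (hprimitive t₀ (right_mem_Icc.2 ht₀))
  have hsplit : y t i =
      (c i * α i (P i) + ∫ u in 0..t₀, g u i) + ∫ u in t₀..(t : ℝ), g u i := by
    have ht₀_mem : t₀ ∈ uIcc 0 tp := mem_uIcc_of_le ht₀ htp
    have ht_mem : t.1 ∈ uIcc 0 tp := mem_uIcc_of_le t.2 ht.2
    rw [hy i hi, add_assoc, intervalIntegral.integral_add_adjacent_intervals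
      ((hg i hi).mono_set (uIcc_subset_uIcc left_mem_uIcc ht₀_mem))
      ((hg i hi).mono_set (uIcc_subset_uIcc ht₀_mem ht_mem))]
  calc Real.exp (-θ * (t.1 - t₀)) * |y t i|
      ≤ Real.exp (-θ * (t.1 - t₀)) * |c i * α i (P i) + ∫ u in 0..t₀, g u i| +
          Real.exp (-θ * (t.1 - t₀)) * |∫ u in t₀..(t : ℝ), g u i| := by
        rw [hsplit, ← mul_add]
        gcongr
        exact abs_add_le _ _
    _ ≤ 1 * (G * K) + C * (Qsem t₀ tp θ ht₀ n x / θ + (tp - t₀)) := by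
        refine add_le_add ?_ (exp_mul_abs_integral_le_mul_Qsem ht₀ hθ hC hi hgrowth₂ ht)
        gcongr
        exact exp_neg_mul_sub_le_one hθ.le ht.1
    _ = G * K + C * (Qsem t₀ tp θ ht₀ n x / θ + (tp - t₀)) := by rw [one_mul]

/-- Estimate (3.10) in the proof of the main theorem:
`𝒬_p(T(x)) ≤ G_p (‖A_p‖_{L¹} 𝒫_p(x) + t₀ B_p) + C_p (𝒬_p(x)/θ_p + t_p − t₀)`. -/
theorem statement_9
    (t₀ : ℝ) (ht₀ : 0 < t₀)
    (f : ℕ → ℝ → (ℕ → ℝ) → ℝ)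
    (hf : ∀ n, ContinuousOn (fun q : ℝ × (ℕ → ℝ) => f n q.1 q.2)
      (Set.Ici (0:ℝ) ×ˢ (Set.univ : Set (ℕ → ℝ))))
    (α : ℕ → C(Set.Icc (0:ℝ) t₀, ℝ) →L[ℝ] ℝ)
    (hα : ∀ n, α n 1 ≠ 1)
    (T : C(Set.Ici (0:ℝ), ℕ → ℝ) → C(Set.Ici (0:ℝ), ℕ → ℝ))
    (hT : IsT t₀ f α T)
    (np : ℕ → ℕ) (hnp : StrictMono np) (hnp0 : ∀ q, 0 < np q)
    (p : ℕ)
    (tp : ℝ) (htp : t₀ < tp) (θ : ℝ) (hθ : 0 < θ)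
    (A : ℝ → ℝ) (B C : ℝ)
    (hA_nonneg : ∀ t ∈ Set.Icc (0:ℝ) t₀, 0 ≤ A t)
    (hA_int : IntervalIntegrable A MeasureTheory.volume 0 t₀)
    (hB : 0 ≤ B) (hC : 0 ≤ C)
    (hgrowth1 : ∀ t ∈ Set.Icc (0:ℝ) t₀, ∀ x : ℕ → ℝ,
      semS (np p) (fun i => f i t x) ≤ A t * semS (np p) x + B)
    (hgrowth2 : ∀ t ∈ Set.Icc t₀ tp, ∀ x : ℕ → ℝ,
      semS (np p) (fun i => f i t x) ≤ C * (semS (np p) x + 1)) :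
    ∀ x : C(Set.Ici (0:ℝ), ℕ → ℝ),
      Qsem t₀ tp θ ht₀.le (np p) (T x) ≤
        Gconst t₀ α (np p) * ((∫ t in (0:ℝ)..t₀, A t) * Psem t₀ (np p) x + t₀ * B) +
          C * (Qsem t₀ tp θ ht₀.le (np p) x / θ + (tp - t₀)) := by
  intro x
  choose P hP hTx using hT x
  exact statement_9_general ht₀.le htp.le hθ
    (fun i _ => intervalIntegrable_comp_pj (hf i) x le_rfl (ht₀.trans htp).le)
    (fun i _ => hP i) (fun i _ => hTx i) hA_nonneg hA_int hB hC
    (fun t ht => hgrowth1 t ht _) (fun t ht => hgrowth2 t ht _)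
end
end
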